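/- arXiv:2604.13212 — 2 statements merged into one kernel-verified Lean document; each statement's English description precedes it below -/
import Mathlib

section
/- For any unicyclic graph G (a connected graph containing exactly one cycle), ST^(4)*(G) = χ*(G), where χ*(G) is the fractional chromatic number of G. -/
/-!
Let `n` be the length of the cycle of `G`; both invariants equal `n / ⌊n / 2⌋`.

A legal operation amounts to giving `u` a colour of its list that no vertex of `W` can use, while
the neighbours outside `W` pay with their shield for the colour they may lose. Hence
`ST⁽⁴⁾`-`(s, t)`-degeneracy gives an `(s + t, t)`-colouring, so `χ*(G) ≤ ST⁽⁴⁾*(G)`. A colour class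
of an `(a, b)`-colouring contains at most `⌊n / 2⌋` vertices of the cycle, so `n * b ≤ a * ⌊n / 2⌋`.

For `ST⁽⁴⁾*(G) ≤ n / ⌊n / 2⌋`, play rounds on the cycle: shade every other vertex in turn, always
saving the preceding vertex and hitting the following one. A round lowers all weights `S + T` by
one. On a cycle of length `2k + 1` with weight `2k + 1` and target `k`, rotating the successive
rounds by one step shades every vertex exactly `k` times. On an even cycle with weight `2t + 1` and
target `t`, `t` rounds that shade the even vertices leave an independent set. The edges off the
cycle are bridges, so `G` grows from the cycle by adding pendant vertices, and these can wait until
the rest is cleared: the neighbour is shaded `t ≤ s` times, which their shield affords.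
-/

open scoped Classical

noncomputable section

namespace StrictDeg

/-- The state of the `ShadeSave` process: the active vertex set (the vertex set of the
current induced subgraph), the current shield, and the current target. -/
structure State (V : Type) where
  A : Finset V
  S : V → ℕ
  T : V → ℕ

variable {V : Type}

/-- The output of the operation `ShadeSave(G[A], S, T, u, W)`. -/
def applyStep (G : SimpleGraph V) (st : State V) (u : V) (W : Finset V) : State V where
  A := if st.T u = 1 then st.A.erase u else st.A
  S := fun v => if G.Adj u v ∧ v ∈ st.A ∧ v ∉ W then st.S v - 1 else st.S v
  T := fun v => if v = u ∧ 1 < st.T u then st.T u - 1 else st.T v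

/-- Legality of the operation `ShadeSave(G[A], S, T, u, W)`:  `u` is a vertex of the current
graph, `W` is a set of neighbors of `u` in the current graph,
`S u + T u > ∑_{w ∈ W} (S w + T w)`, and the output shield is nonnegative (in `ℕ` terms:
every neighbor of `u` in the current graph that is not saved has shield value at least 1). -/
def LegalStep (G : SimpleGraph V) (st : State V) (u : V) (W : Finset V) : Prop :=
  u ∈ st.A ∧
  (∀ w ∈ W, w ∈ st.A ∧ G.Adj u w) ∧
  (∑ w ∈ W, (st.S w + st.T w)) < st.S u + st.T u ∧
  (∀ v ∈ st.A, G.Adj u v → v ∉ W → 1 ≤ st.S v)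

/-- `LegalSeq G st l` means `l` is a legal sequence of `ShadeSave` operations starting
from the state `st`. -/
def LegalSeq (G : SimpleGraph V) : State V → List (V × Finset V) → Prop
  | _, [] => True
  | st, op :: rest => LegalStep G st op.1 op.2 ∧ LegalSeq G (applyStep G st op.1 op.2) rest

/-- The final state after applying the operations in `l` in order. -/
def finalState (G : SimpleGraph V) (st : State V) (l : List (V × Finset V)) : State V :=
  l.foldl (fun s op => applyStep G s op.1 op.2) st

/-- The induced subgraph of `G` on `A`, with shield `S` and target `T`, admits a complete
legal sequence, i.e. it is `ST⁽³⁾`-`(S,T)`-degenerate. -/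
def ST3DegOn (G : SimpleGraph V) (A : Finset V) (S T : V → ℕ) : Prop :=
  ∃ l : List (V × Finset V),
    LegalSeq G ⟨A, S, T⟩ l ∧ (finalState G ⟨A, S, T⟩ l).A = ∅

/-- The induced subgraph of `G` on `A`, with shield `S` and target `T`, admits a complete
restricted (every operation saves on at most one vertex) legal sequence, i.e. it is
`ST⁽⁴⁾`-`(S,T)`-degenerate. -/
def ST4DegOn (G : SimpleGraph V) (A : Finset V) (S T : V → ℕ) : Prop :=
  ∃ l : List (V × Finset V),
    LegalSeq G ⟨A, S, T⟩ l ∧ (∀ op ∈ l, op.2.card ≤ 1) ∧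
      (finalState G ⟨A, S, T⟩ l).A = ∅

/-- `G` is `ST⁽³⁾`-`(S,T)`-degenerate. -/
def ST3Deg [Fintype V] (G : SimpleGraph V) (S T : V → ℕ) : Prop :=
  ST3DegOn G Finset.univ S T

/-- `G` is `ST⁽⁴⁾`-`(S,T)`-degenerate. -/
def ST4Deg [Fintype V] (G : SimpleGraph V) (S T : V → ℕ) : Prop :=
  ST4DegOn G Finset.univ S T

/-- The fractional strict type-3 degeneracy
`ST⁽³⁾*(G) = inf {(s+t)/t : G is ST⁽³⁾-(s,t)-degenerate}`. -/
def ST3Star [Fintype V] (G : SimpleGraph V) : ℝ :=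
  sInf { x : ℝ | ∃ s t : ℕ, 1 ≤ t ∧ ST3Deg G (fun _ => s) (fun _ => t) ∧
    x = ((s : ℝ) + t) / t }

/-- The fractional strict type-4 degeneracy
`ST⁽⁴⁾*(G) = inf {(s+t)/t : G is ST⁽⁴⁾-(s,t)-degenerate}`. -/
def ST4Star [Fintype V] (G : SimpleGraph V) : ℝ :=
  sInf { x : ℝ | ∃ s t : ℕ, 1 ≤ t ∧ ST4Deg G (fun _ => s) (fun _ => t) ∧
    x = ((s : ℝ) + t) / t }

/-- A cover `𝓗 = (L, H)` of the graph `G`. -/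
structure Cover (G : SimpleGraph V) where
  /-- The vertex type of the cover graph `H`. -/
  U : Type
  fin : Fintype U
  /-- The cover graph. -/
  H : SimpleGraph U
  /-- The lists: `L v` is the part of the partition of `V(H)` corresponding to `v`. -/
  L : V → Finset U
  part : ∀ x : U, ∃! v : V, x ∈ L v
  indep : ∀ v : V, ∀ x ∈ L v, ∀ y ∈ L v, ¬ H.Adj x y
  cross : ∀ u v : V, ∀ x ∈ L u, ∀ y ∈ L v, H.Adj x y → G.Adj u v
  matching : ∀ u v : V, G.Adj u v → ∀ x ∈ L u, ∀ y ∈ L v, ∀ y' ∈ L v,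
      H.Adj x y → H.Adj x y' → y = y'

/-- `G` is `(𝓗, b)`-colorable: there is an independent set of the cover graph meeting
every list in at least `b` vertices. -/
def Cover.Colorable {G : SimpleGraph V} (C : Cover G) (b : ℕ) : Prop :=
  ∃ I : Finset C.U, (∀ x ∈ I, ∀ y ∈ I, ¬ C.H.Adj x y) ∧ ∀ v : V, b ≤ (I ∩ C.L v).card

/-- `G` is `(a,b)`-DP-colorable. -/
def DPColorable (G : SimpleGraph V) (a b : ℕ) : Prop :=
  ∀ C : Cover G, (∀ v : V, (C.L v).card = a) → C.Colorable b

/-- The fractional DP-chromatic number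
`χ*_DP(G) = inf {a/b : G is (a,b)-DP-colorable}`. -/
def DPStar (G : SimpleGraph V) : ℝ :=
  sInf { x : ℝ | ∃ a b : ℕ, 1 ≤ b ∧ b ≤ a ∧ DPColorable G a b ∧ x = (a : ℝ) / b }

/-- `G` is `(F₁, F₂)`-DP-colorable. -/
def DPColorableFn (G : SimpleGraph V) (F₁ F₂ : V → ℕ) : Prop :=
  ∀ C : Cover G, (∀ v : V, (C.L v).card = F₁ v) →
    ∃ I : Finset C.U, (∀ x ∈ I, ∀ y ∈ I, ¬ C.H.Adj x y) ∧
      ∀ v : V, (I ∩ C.L v).card = F₂ v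


/-- `G` is `(a,b)`-colorable: each vertex receives a `b`-element subset of `{1,…,a}` so that
adjacent vertices receive disjoint sets. -/
def ABColorable {V : Type} (G : SimpleGraph V) (a b : ℕ) : Prop :=
  ∃ f : V → Finset (Fin a), (∀ v, (f v).card = b) ∧
    ∀ u v, G.Adj u v → Disjoint (f u) (f v)

/-- The fractional chromatic number `χ*(G) = inf {a/b : G is (a,b)-colorable}` (for finite
graphs this infimum is attained). -/
def FracChrom {V : Type} (G : SimpleGraph V) : ℝ :=
  sInf { x : ℝ | ∃ a b : ℕ, 1 ≤ b ∧ b ≤ a ∧ ABColorable G a b ∧ x = (a : ℝ) / b }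

/-! ### Colourings from legal sequences -/

namespace State

/-- The remaining target of each vertex, extended by zero to the vertices already removed. -/
def demand (st : State V) (v : V) : ℕ := if v ∈ st.A then st.T v else 0

/-- The number `S v + T v` that the legality of an operation compares between vertices. -/
def weight (st : State V) (v : V) : ℕ := st.S v + st.T v

lemma demand_of_mem {st : State V} {v : V} (hv : v ∈ st.A) : st.demand v = st.T v := if_pos hv

lemma demand_pos_iff {st : State V} (hT : ∀ v ∈ st.A, 0 < st.T v) {v : V} :
    0 < st.demand v ↔ v ∈ st.A := by
  unfold demand
  split_ifs with hv
  · exact iff_of_true (hT v hv) hv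
  · exact iff_of_false (lt_irrefl 0) hv

lemma mem_applyStep_iff {G : SimpleGraph V} {st : State V} {u v : V} {W : Finset V} :
    v ∈ (applyStep G st u W).A ↔ v ∈ st.A ∧ (v = u → st.T u ≠ 1) := by
  by_cases hu : st.T u = 1 <;> simp [applyStep, hu, and_comm]

lemma applyStep_target_pos {G : SimpleGraph V} {st : State V} {u : V} {W : Finset V}
    (hT : ∀ v ∈ st.A, 0 < st.T v) : ∀ v ∈ (applyStep G st u W).A, 0 < (applyStep G st u W).T v := by
  intro v hv
  have := hT v (mem_applyStep_iff.1 hv).1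
  simp only [applyStep]
  split_ifs <;> omega

lemma demand_applyStep {G : SimpleGraph V} {st : State V} {u : V} {W : Finset V}
    (hu : u ∈ st.A) (hT : 0 < st.T u) :
    (applyStep G st u W).demand = Function.update st.demand u (st.demand u - 1) := by
  funext v
  rcases eq_or_ne v u with rfl | hv
  · rw [Function.update_self]
    simp only [demand, applyStep]
    grind
  · rw [Function.update_of_ne hv]
    simp only [demand, applyStep]
    grind

/-- Lists of `S v + T v` colours at the vertices of the current graph suffice for a multicolouring
from these lists in which each vertex `v` receives its target number of colours. -/
def ListColorable (α : Type*) (G : SimpleGraph V) (st : State V) : Prop :=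
  ∀ L : V → Finset α, (∀ v ∈ st.A, st.weight v ≤ (L v).card) →
    ∃ f : V → Finset α, (∀ v, f v ⊆ L v) ∧ (∀ v, (f v).card = st.demand v) ∧
      ∀ u v, G.Adj u v → Disjoint (f u) (f v)

lemma listColorable_of_eq_empty {α : Type*} {G : SimpleGraph V} {st : State V} (h : st.A = ∅) :
    st.ListColorable α G :=
  fun _ _ => ⟨fun _ => ∅, by simp [demand, h]⟩

end State

lemma disjoint_update_insert {α : Type*} {G : SimpleGraph V} {g : V → Finset α} {u : V} {x : α}
    (hg : ∀ v w, G.Adj v w → Disjoint (g v) (g w)) (hx : ∀ v, G.Adj u v → x ∉ g v) (v w : V)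
    (hvw : G.Adj v w) : Disjoint (Function.update g u (insert x (g u)) v)
      (Function.update g u (insert x (g u)) w) := by
  rcases eq_or_ne v u with rfl | hv
  · rw [Function.update_self, Function.update_of_ne hvw.ne', Finset.disjoint_insert_left]
    exact ⟨hx w hvw, hg v w hvw⟩
  rcases eq_or_ne w u with rfl | hw
  · rw [Function.update_self, Function.update_of_ne hv, Finset.disjoint_insert_right]
    exact ⟨hx v hvw.symm, hg v w hvw⟩
  · rw [Function.update_of_ne hv, Function.update_of_ne hw]
    exact hg v w hvw

namespace LegalStep

lemma weight_applyStep {G : SimpleGraph V} {st : State V} {u v : V} {W : Finset V}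
    (h : LegalStep G st u W) (hT : 0 < st.T u) (hv : v ∈ (applyStep G st u W).A) :
    (applyStep G st u W).weight v =
      st.weight v - if v = u ∨ (G.Adj u v ∧ v ∉ W) then 1 else 0 := by
  obtain ⟨hv, hu⟩ := State.mem_applyStep_iff.1 hv
  have hhit := h.2.2.2 v hv
  have hirrefl : ¬ G.Adj u u := G.irrefl
  simp only [State.weight, applyStep]
  grind

lemma exists_color {α : Type*} {G : SimpleGraph V} {st : State V} {u : V} {W : Finset V}
    (h : LegalStep G st u W) {L : V → Finset α} (hL : ∀ v ∈ st.A, (L v).card = st.weight v) :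
    ∃ x ∈ L u, ∀ w ∈ W, x ∉ L w := by
  obtain ⟨hu, hW, hsave, -⟩ := h
  have hcard : (W.biUnion L).card < (L u).card := calc
    (W.biUnion L).card ≤ ∑ w ∈ W, (L w).card := Finset.card_biUnion_le
    _ = ∑ w ∈ W, (st.S w + st.T w) := Finset.sum_congr rfl fun w hw => hL w (hW w hw).1
    _ < (L u).card := by rwa [hL u hu]
  simpa using Finset.exists_mem_notMem_of_card_lt_card hcard

lemma listColorable {α : Type*} {G : SimpleGraph V} {st : State V} {u : V} {W : Finset V}
    (h : LegalStep G st u W) (hT : 0 < st.T u) (hcol : (applyStep G st u W).ListColorable α G) :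
    st.ListColorable α G := by
  intro L hL
  have hsub : ∀ v, ∃ M ⊆ L v, v ∈ st.A → M.card = st.weight v := by
    intro v
    by_cases hv : v ∈ st.A
    · obtain ⟨M, hM, hcard⟩ := Finset.exists_subset_card_eq (hL v hv)
      exact ⟨M, hM, fun _ => hcard⟩
    · exact ⟨∅, Finset.empty_subset _, fun hv' => absurd hv' hv⟩
  choose M hML hM using hsub
  obtain ⟨x, hxu, hxW⟩ := h.exists_color hM
  obtain ⟨g, hgM, hg, hdisj⟩ := hcol
    (fun v => if v = u ∨ G.Adj u v then (M v).erase x else M v) (by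
      intro v hv
      have hpred := Finset.pred_card_le_card_erase (s := M v) (a := x)
      have hMv := hM v (State.mem_applyStep_iff.1 hv).1
      have herase := fun hvW => Finset.erase_eq_of_notMem (hxW v hvW)
      rw [h.weight_applyStep hT hv]
      grind)
  rw [State.demand_applyStep h.1 hT] at hg
  have hxg : ∀ v, v = u ∨ G.Adj u v → x ∉ g v := by grind
  refine ⟨Function.update g u (insert x (g u)), fun v => ?_, fun v => ?_,
    disjoint_update_insert hdisj fun v hv => hxg v (.inr hv)⟩
  · rcases eq_or_ne v u with rfl | hv <;> grind
  · rcases eq_or_ne v u with rfl | hv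
    · have := (State.demand_of_mem h.1).trans_gt hT
      rw [Function.update_self, Finset.card_insert_of_notMem (hxg v (.inl rfl)), hg,
        Function.update_self]
      omega
    · rw [Function.update_of_ne hv, hg, Function.update_of_ne hv]

end LegalStep

lemma LegalSeq.listColorable {α : Type*} {G : SimpleGraph V} {l : List (V × Finset V)} :
    ∀ {st : State V}, LegalSeq G st l → (∀ v ∈ st.A, 0 < st.T v) → (finalState G st l).A = ∅ →
      st.ListColorable α G := by
  induction l with
  | nil => exact fun _ _ hfinal => State.listColorable_of_eq_empty hfinal
  | cons op l ih =>
    intro st hl hT hfinal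
    exact hl.1.listColorable (hT _ hl.1.1) (ih hl.2 (State.applyStep_target_pos hT) hfinal)

lemma ST4Deg.abColorable [Fintype V] {G : SimpleGraph V} {s t : ℕ} (ht : 1 ≤ t)
    (h : ST4Deg G (fun _ => s) (fun _ => t)) : ABColorable G (s + t) t := by
  obtain ⟨l, hl, -, hfinal⟩ := h
  obtain ⟨f, -, hf, hdisj⟩ := hl.listColorable (fun _ _ => ht) hfinal
    (fun _ => (Finset.univ : Finset (Fin (s + t)))) (by simp [State.weight])
  exact ⟨f, fun v => (hf v).trans (State.demand_of_mem (Finset.mem_univ v)), hdisj⟩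

/-! ### Fractional colourings of cycles -/

lemma ABColorable.comap {U V : Type} {H : SimpleGraph U} {G : SimpleGraph V} {a b : ℕ}
    (h : ABColorable G a b) (φ : H →g G) : ABColorable H a b := by
  obtain ⟨f, hf, hdisj⟩ := h
  exact ⟨f ∘ φ, fun v => hf (φ v), fun u v huv => hdisj _ _ (φ.map_adj huv)⟩

lemma ABColorable.card_mul_le {V : Type} [Fintype V] {G : SimpleGraph V} {a b : ℕ}
    (h : ABColorable G a b) : Fintype.card V * b ≤ a * G.indepNum := by
  obtain ⟨f, hf, hdisj⟩ := h
  have hclass : ∀ c : Fin a, (Finset.univ.filter fun v => c ∈ f v).card ≤ G.indepNum := by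
    refine fun c => SimpleGraph.IsIndepSet.card_le_indepNum fun u hu v hv _ huv => ?_
    exact Finset.disjoint_left.1 (hdisj u v huv) (by simpa using hu) (by simpa using hv)
  calc Fintype.card V * b
      = ∑ v, (f v).card := by simp [hf]
    _ = ∑ c, (Finset.univ.filter fun v => c ∈ f v).card := by
        simpa [Finset.bipartiteAbove, Finset.bipartiteBelow] using
          Finset.sum_card_bipartiteAbove_eq_sum_card_bipartiteBelow (s := Finset.univ)
            (t := Finset.univ) fun v c => c ∈ f v
    _ ≤ a * G.indepNum := by
        simpa using Finset.sum_le_card_nsmul Finset.univ _ _ fun c _ => hclass c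

lemma two_mul_indepNum_cycleGraph_le {n : ℕ} (hn : 2 ≤ n) :
    2 * (SimpleGraph.cycleGraph n).indepNum ≤ n := by
  obtain ⟨n, rfl⟩ := Nat.exists_eq_add_of_le' hn
  obtain ⟨I, hI, hcard⟩ := (SimpleGraph.cycleGraph (n + 2)).exists_isNIndepSet_indepNum
  have hdisj : Disjoint I (I.map (addRightEmbedding 1)) := by
    refine Finset.disjoint_left.2 fun v hv hv' => ?_
    obtain ⟨u, hu, rfl⟩ := Finset.mem_map.1 hv'
    have hadj : (SimpleGraph.cycleGraph (n + 2)).Adj u (u + 1) :=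
      SimpleGraph.cycleGraph_adj.2 (.inr (add_sub_cancel_left u 1))
    exact hI hu hv hadj.ne hadj
  calc 2 * (SimpleGraph.cycleGraph (n + 2)).indepNum
      = (I ∪ I.map (addRightEmbedding 1)).card := by
        rw [Finset.card_union_of_disjoint hdisj, Finset.card_map, hcard, two_mul]
    _ ≤ n + 2 := by simpa using Finset.card_le_univ (I ∪ I.map (addRightEmbedding 1))

lemma ABColorable.cycleGraph_mul_le {n a b : ℕ} (hn : 2 ≤ n)
    (h : ABColorable (SimpleGraph.cycleGraph n) a b) : n * b ≤ a * (n / 2) := by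
  have hindep := two_mul_indepNum_cycleGraph_le hn
  calc n * b = Fintype.card (Fin n) * b := by rw [Fintype.card_fin]
    _ ≤ a * (SimpleGraph.cycleGraph n).indepNum := h.card_mul_le
    _ ≤ a * (n / 2) := Nat.mul_le_mul_left a (by omega)

/-! ### Clearing a graph with lower bounds on the weights -/

/-- The degeneracy game with exact demands `R` (zero at removed vertices) in which only lower bounds
`F` on the weights `S + T` are recorded; the bounds may be relaxed at every operation. The save
condition keeps `R w ≤ F w` so that a vertex too heavy to be saved can always afford a hit. -/
inductive Clearable (G : SimpleGraph V) : (V → ℕ) → (V → ℕ) → Prop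
  | done (F : V → ℕ) : Clearable G F 0
  | shade {F F' R : V → ℕ} (u : V) (W : Finset V) (hu : 0 < R u) (hW : W.card ≤ 1)
      (hsave : ∀ w ∈ W, R w ≤ F w ∧ F w < F u)
      (hhit : ∀ v, G.Adj u v → v ∉ W → 0 < R v → R v < F v)
      (hF' : ∀ v, F' v ≤ F v - if v = u ∨ (G.Adj u v ∧ v ∉ W) then 1 else 0)
      (hrest : Clearable G F' (Function.update R u (R u - 1))) : Clearable G F R

lemma legalStep_filter_save {G : SimpleGraph V} {st : State V} {F : V → ℕ} {u : V} {W : Finset V}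
    (hT : ∀ v ∈ st.A, 0 < st.T v) (hF : ∀ v ∈ st.A, F v ≤ st.weight v) (hu : u ∈ st.A)
    (hW : W.card ≤ 1) (hsave : ∀ w ∈ W, st.demand w ≤ F w ∧ F w < F u)
    (hhit : ∀ v, G.Adj u v → v ∉ W → 0 < st.demand v → st.demand v < F v) :
    LegalStep G st u {w ∈ W | w ∈ st.A ∧ G.Adj u w ∧ st.weight w < st.weight u} := by
  refine ⟨hu, by grind, ?_, fun v hv huv hvW => ?_⟩
  · have : Nonempty V := ⟨u⟩
    obtain ⟨x, hx⟩ := Finset.card_le_one_iff_subset_singleton.1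
      ((Finset.card_filter_le W fun w => w ∈ st.A ∧ G.Adj u w ∧ st.weight w < st.weight u).trans hW)
    rcases Finset.subset_singleton_iff.1 hx with hempty | hsingle
    · rw [hempty, Finset.sum_empty]
      exact Nat.add_pos_right _ (hT u hu)
    · have hxW := Finset.mem_filter.1 (hsingle ▸ Finset.mem_singleton_self x)
      rw [hsingle, Finset.sum_singleton]
      exact hxW.2.2.2
  · have hdemand := State.demand_of_mem hv
    have hlt : st.demand v < st.weight v := by
      by_cases hvW' : v ∈ W
      · have hheavy : st.weight u ≤ st.weight v := by grind
        calc st.demand v ≤ F v := (hsave v hvW').1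
          _ < F u := (hsave v hvW').2
          _ ≤ st.weight u := hF u hu
          _ ≤ st.weight v := hheavy
      · have hpos := (State.demand_pos_iff hT).2 hv
        exact (hhit v huv hvW' hpos).trans_le (hF v hv)
    rw [State.weight] at hlt
    omega

theorem Clearable.st4DegOn {G : SimpleGraph V} {F R : V → ℕ} (h : Clearable G F R) :
    ∀ {st : State V}, (∀ v ∈ st.A, 0 < st.T v) → st.demand = R → (∀ v ∈ st.A, F v ≤ st.weight v) →
      ST4DegOn G st.A st.S st.T := by
  induction h with
  | done F =>
    intro st hT hR _
    refine ⟨[], trivial, by simp, Finset.eq_empty_of_forall_notMem fun v hv => ?_⟩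
    exact ((State.demand_pos_iff hT).2 hv).ne' (congrFun hR v)
  | @shade F F' R u W hu hW hsave hhit hF' _ ih =>
    rintro st hT rfl hF
    have huA := (State.demand_pos_iff hT).1 hu
    have hlegal := legalStep_filter_save hT hF huA hW hsave hhit
    set W' := {w ∈ W | w ∈ st.A ∧ G.Adj u w ∧ st.weight w < st.weight u}
    obtain ⟨l, hl, hcard, hfinal⟩ := ih (State.applyStep_target_pos hT)
      (State.demand_applyStep (G := G) (W := W') huA (hT u huA)) fun v hv => by
        have hvA := (State.mem_applyStep_iff.1 hv).1
        have := hF v hvA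
        have := hF u huA
        have := hF' v
        rw [hlegal.weight_applyStep (hT u huA) hv]
        grind
    refine ⟨(u, W') :: l, ⟨hlegal, hl⟩, List.forall_mem_cons.2 ⟨?_, hcard⟩, hfinal⟩
    exact (Finset.card_filter_le W _).trans hW

namespace Clearable

-- A saved vertex that is no longer lighter than `u` can afford to be hit instead.
lemma mono {G : SimpleGraph V} {F F₀ R : V → ℕ} (h : Clearable G F R) (hF : F ≤ F₀) :
    Clearable G F₀ R := by
  cases h with
  | done => exact .done F₀
  | @shade _ F' _ u W hu hW hsave hhit hF' hrest =>
    refine .shade u {w ∈ W | F₀ w < F₀ u} hu ((Finset.card_filter_le W _).trans hW) (fun w hw => ?_)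
      (fun v huv hv hRv => ?_) (fun v => ?_) hrest
    · obtain ⟨hwW, hlt⟩ := Finset.mem_filter.1 hw
      exact ⟨(hsave w hwW).1.trans (hF w), hlt⟩
    · have := hF u
      have := hF v
      grind
    · have := hF u
      have := hF v
      have := hF' v
      grind

lemma of_isIndepSet [Finite V] {G : SimpleGraph V} (F : V → ℕ) {R : V → ℕ}
    (hR : G.IsIndepSet (Function.support R)) : Clearable G F R := by
  have := Fintype.ofFinite V
  induction hN : ∑ v, R v generalizing F R with
  | zero =>
    obtain rfl : R = 0 := funext fun v => Finset.sum_eq_zero_iff.1 hN v (Finset.mem_univ v)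
    exact .done F
  | succ N ih =>
    obtain ⟨u, -, hu⟩ : ∃ u ∈ Finset.univ, R u ≠ 0 :=
      Finset.exists_ne_zero_of_sum_ne_zero (hN ▸ N.succ_ne_zero)
    refine .shade u ∅ hu.bot_lt (by simp) (by simp)
      (fun v huv _ hv => absurd huv (hR hu hv.ne' huv.ne)) (fun v => le_rfl) (ih _ ?_ ?_)
    · have hsub : Function.support (Function.update R u (R u - 1)) ⊆ Function.support R := by
        intro v hv
        rcases eq_or_ne v u with rfl | hvu
        · exact hu
        · rwa [Function.mem_support, Function.update_of_ne hvu] at hv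
      exact hR.mono hsub
    · have := Finset.add_sum_erase Finset.univ R (Finset.mem_univ u)
      rw [Finset.sum_update_of_mem (Finset.mem_univ u), Finset.sdiff_singleton_eq_erase]
      have := hu.bot_lt
      omega

lemma of_comp_embedding {U : Type} {H : SimpleGraph U} {G : SimpleGraph V} (φ : H ↪g G)
    {F R : V → ℕ} (h : Clearable H (F ∘ ⇑φ) (R ∘ ⇑φ)) (hR : ∀ v ∉ Set.range φ, R v = 0) :
    Clearable G F R := by
  generalize hF₀ : F ∘ ⇑φ = F₀, hR₀ : R ∘ ⇑φ = R₀ at h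
  induction h generalizing F R with
  | done =>
    obtain rfl : R = 0 := funext fun v => by
      by_cases hv : v ∈ Set.range φ
      · obtain ⟨x, rfl⟩ := hv
        exact congrFun hR₀ x
      · exact hR v hv
    exact .done F
  | @shade _ F' _ u W hu hW hsave hhit hF' _ ih =>
    subst hF₀ hR₀
    refine .shade (F' := Function.extend φ F' 0) (φ u) (W.map φ.toEmbedding) hu (by simpa) ?_ ?_ ?_
      (ih ?_ ?_ ?_)
    · simpa using hsave
    · intro v huv hvW hv
      obtain ⟨x, rfl⟩ := not_imp_comm.1 (hR v) hv.ne'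
      exact hhit x (φ.map_adj_iff.1 huv) (fun hx => hvW (Finset.mem_map_of_mem _ hx)) hv
    · intro v
      by_cases hv : v ∈ Set.range φ
      · obtain ⟨x, rfl⟩ := hv
        rw [φ.injective.extend_apply]
        simpa using hF' x
      · rw [Function.extend_apply' _ _ _ hv]
        exact Nat.zero_le _
    · intro v hv
      rw [Function.update_of_ne fun h => hv ⟨u, h.symm⟩]
      exact hR v hv
    · exact Function.extend_comp φ.injective F' 0
    · exact Function.update_comp_eq_of_injective R φ.injective u _

-- The pendant vertex is never saved, and every shading of its neighbour costs it one unit of `f`.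
lemma update_pendant [Finite V] {G : SimpleGraph V} {F R : V → ℕ} (h : Clearable G F R) {v : V}
    (hv : R v = 0) (hone : ∀ x y, G.Adj v x → G.Adj v y → 0 < R x → 0 < R y → x = y) {f t : ℕ}
    (hf : ∀ x, G.Adj v x → t + R x ≤ f) :
    Clearable G (Function.update F v f) (Function.update R v t) := by
  induction h generalizing f with
  | done F =>
    have hsupp : Function.support (Function.update 0 v t) ⊆ {v} := fun x hx => by
      by_contra hxv
      exact hx (Function.update_of_ne hxv _ _)
    exact of_isIndepSet _ ((Set.pairwise_singleton v _).mono hsupp)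
  | @shade F F' R u W hu hW hsave hhit hF' _ ih =>
    have huv : u ≠ v := by grind
    have hrest := ih (f := f - if G.Adj v u then 1 else 0) (by rwa [Function.update_of_ne huv.symm])
      (by grind) (by grind)
    rw [Function.update_comm huv] at hrest
    refine .shade (F' := Function.update F' v (f - if G.Adj v u then 1 else 0)) u (W.erase v)
      (by rwa [Function.update_of_ne huv]) ((Finset.card_erase_le).trans hW) ?_ ?_ ?_ ?_
    · grind
    · intro w huw hwW hw
      rcases eq_or_ne w v with rfl | hwv
      · have := hf u huw.symm
        rw [Function.update_self, Function.update_self]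
        omega
      · have := hhit w huw
        rw [Function.update_of_ne hwv] at hw ⊢
        rw [Function.update_of_ne hwv]
        grind
    · intro w
      rcases eq_or_ne w v with rfl | hwv
      · simp [huv.symm, G.adj_comm]
      · rw [Function.update_of_ne hwv, Function.update_of_ne hwv]
        simpa [hwv] using hF' w
    · rwa [Function.update_of_ne huv]

end Clearable

/-! ### Rounds on cycles -/

lemma cycleGraph_adj_iff_val {n : ℕ} (hn : 2 ≤ n) {u v : Fin n} :
    (SimpleGraph.cycleGraph n).Adj u v ↔
      u.val + 1 = v.val ∨ v.val + 1 = u.val ∨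
        (u.val = 0 ∧ v.val + 1 = n) ∨ (v.val = 0 ∧ u.val + 1 = n) := by
  have hsub : ∀ x y : Fin n, (x - y).val = 1 ↔ y.val + 1 = x.val ∨ (x.val = 0 ∧ y.val + 1 = n) := by
    intro x y
    rcases le_or_gt y x with hyx | hxy
    · rw [Fin.coe_sub_iff_le.2 hyx]
      omega
    · rw [Fin.coe_sub_iff_lt.2 hxy]
      omega
  rw [SimpleGraph.cycleGraph_adj', hsub, hsub]
  tauto

/-- Lower bounds on the weights after the first `i` operations of a round on the cycle `Fin n`,
which shade `0, 2, 4, …` in turn: each operation saves the preceding vertex and hits the following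
one. The last vertex starts at `f - 1`, so that it can be saved by the first operation. -/
def roundWeight {n : ℕ} (f i : ℕ) (v : Fin n) : ℕ :=
  f - (if v.val < 2 * i then 1 else 0) - if v.val + 1 = n then 1 else 0

/-- The number of times, zero or one, that the first `i` operations of a round on the cycle `Fin n`
shade `v`. -/
def roundShade {n : ℕ} (i : ℕ) (v : Fin n) : ℕ := if Even v.val ∧ v.val < 2 * i then 1 else 0

/-- The demands after the first `i` operations of a round on the cycle `Fin n`. -/
def roundDemand {n : ℕ} (R : Fin n → ℕ) (i : ℕ) (v : Fin n) : ℕ := R v - roundShade i v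

namespace Clearable

lemma roundStep {n m f i : ℕ} {R : Fin n → ℕ} (hn : 3 ≤ n) (hm : 2 * m ≤ n) (hi : i < m)
    (hshade : ∀ v, Even v.val → v.val < 2 * m → 0 < R v)
    (hkeep : ∀ v, ¬ (Even v.val ∧ v.val < 2 * m) → R v + 1 ≤ f)
    (hlast : 2 * m = n → ∀ v, v.val + 1 = n → R v + 2 ≤ f)
    (h : Clearable (SimpleGraph.cycleGraph n) (roundWeight f (i + 1)) (roundDemand R (i + 1))) :
    Clearable (SimpleGraph.cycleGraph n) (roundWeight f i) (roundDemand R i) := by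
  have hpred : (if i = 0 then n - 1 else 2 * i - 1) < n := by split_ifs <;> omega
  obtain ⟨w, hw⟩ : ∃ w : Fin n, w.val = if i = 0 then n - 1 else 2 * i - 1 := ⟨⟨_, hpred⟩, rfl⟩
  obtain ⟨u, hu⟩ : ∃ u : Fin n, u.val = 2 * i := ⟨⟨2 * i, by omega⟩, rfl⟩
  have hadj := fun v => cycleGraph_adj_iff_val (by omega : 2 ≤ n) (u := u) (v := v)
  have hRu := hshade u (by simp [hu]) (by omega)
  refine .shade (F' := roundWeight f (i + 1)) u {w} ?_ (by simp) ?_ ?_ ?_ ?_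
  · simpa [roundDemand, roundShade, hu] using hRu
  · have := hkeep w (by grind)
    grind [roundWeight, roundDemand, roundShade]
  · intro v huv hvw _
    have hval : v.val = 2 * i + 1 := by grind
    have := hkeep v (by grind)
    have := (hlast · v)
    grind [roundWeight, roundDemand, roundShade]
  · intro v
    simp only [Finset.mem_singleton, hadj, roundWeight]
    grind
  · convert h using 1
    funext v
    simp only [Function.update, eq_rec_constant, dite_eq_ite, roundDemand, roundShade]
    grind

lemma round {n m f : ℕ} {R : Fin n → ℕ} (hn : 3 ≤ n) (hm : 2 * m ≤ n)
    (hshade : ∀ v, Even v.val → v.val < 2 * m → 0 < R v)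
    (hkeep : ∀ v, ¬ (Even v.val ∧ v.val < 2 * m) → R v + 1 ≤ f)
    (hlast : 2 * m = n → ∀ v, v.val + 1 = n → R v + 2 ≤ f)
    (h : Clearable (SimpleGraph.cycleGraph n) (roundWeight f m) (roundDemand R m)) :
    Clearable (SimpleGraph.cycleGraph n) (roundWeight f 0) R := by
  have hzero : roundDemand R 0 = R := funext fun v => by simp [roundDemand, roundShade]
  rw [← hzero]
  refine Nat.decreasingInduction (motive := fun i _ => Clearable (SimpleGraph.cycleGraph n)
    (roundWeight f i) (roundDemand R i)) (fun i hi => ?_) h (Nat.zero_le m)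
  exact roundStep hn hm hi hshade hkeep hlast

lemma cycleGraph_even {m : ℕ} (hm : 2 ≤ m) (t : ℕ) :
    Clearable (SimpleGraph.cycleGraph (2 * m)) (fun _ => 2 * t + 1) (fun _ => t) := by
  have hround : ∀ q, Clearable (SimpleGraph.cycleGraph (2 * m)) (roundWeight (t + 1 + q) 0)
      (fun v => if Even v.val then q else t) := by
    intro q
    induction q with
    | zero =>
      refine of_isIndepSet _ fun u hu v hv _ huv => ?_
      rw [cycleGraph_adj_iff_val (by omega)] at huv
      grind [Function.mem_support]
    | succ q ih =>
      refine round (m := m) (by omega) le_rfl (by grind) (by grind) (by grind) ?_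
      have hweight : roundWeight (n := 2 * m) (t + 1 + (q + 1)) m = roundWeight (t + 1 + q) 0 :=
        funext fun v => by simp [roundWeight, v.isLt]
      have hdemand : roundDemand (n := 2 * m) (fun v => if Even v.val then q + 1 else t) m =
          fun v => if Even v.val then q else t :=
        funext fun v => by by_cases hv : Even v.val <;> simp [roundDemand, roundShade, v.isLt, hv]
      rwa [hweight, hdemand]
  have hbound : roundWeight (n := 2 * m) (t + 1 + t) 0 ≤ fun _ => 2 * t + 1 := fun v => by
    simp only [roundWeight]
    omega
  simpa using (hround t).mono hbound

lemma of_cycleGraph_rotate {n : ℕ} [NeZero n] {F R : Fin n → ℕ}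
    (h : Clearable (SimpleGraph.cycleGraph n) (fun v => F (v + 1)) (fun v => R (v + 1))) :
    Clearable (SimpleGraph.cycleGraph n) F R := by
  have hrot : ∀ {u v : Fin n}, (SimpleGraph.cycleGraph n).Adj (Equiv.addRight 1 u)
      (Equiv.addRight 1 v) ↔ (SimpleGraph.cycleGraph n).Adj u v := by
    simp [SimpleGraph.cycleGraph_adj']
  exact of_comp_embedding (RelIso.toRelEmbedding ⟨Equiv.addRight 1, hrot⟩) h
    fun v hv => absurd ⟨v - 1, sub_add_cancel v 1⟩ hv

end Clearable

/-- The number of the rounds `0, …, q - 1` shading `v` on a cycle of length `2 * k + 1`, if the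
`j`-th of these rounds is rotated by `j`. -/
def shadeCount {k : ℕ} (q : ℕ) (v : Fin (2 * k + 1)) : ℕ :=
  ∑ j ∈ Finset.range q, roundShade k (v - j • 1)

lemma shadeCount_le {k q : ℕ} (v : Fin (2 * k + 1)) : shadeCount q v ≤ q := calc
  shadeCount q v ≤ ∑ _j ∈ Finset.range q, 1 :=
    Finset.sum_le_sum fun _ _ => by unfold roundShade; split_ifs <;> simp
  _ = q := by simp

lemma shadeCount_succ {k : ℕ} (q : ℕ) (v : Fin (2 * k + 1)) :
    shadeCount (q + 1) v = shadeCount q (v - 1) + roundShade k v := by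
  simp only [shadeCount, Finset.sum_range_succ', succ_nsmul', zero_nsmul, sub_zero, sub_sub]

lemma sum_roundShade (k : ℕ) : ∑ v : Fin (2 * k + 1), roundShade k v = k := by
  have hfilter : ((Finset.range (2 * k + 1)).filter fun x => Even x ∧ x < 2 * k) =
      (Finset.range k).image (2 * ·) := by
    ext x
    simp only [Finset.mem_filter, Finset.mem_range, Finset.mem_image, even_iff_exists_two_mul]
    constructor
    · rintro ⟨-, ⟨y, rfl⟩, hy⟩
      exact ⟨y, by omega, rfl⟩
    · rintro ⟨y, hy, rfl⟩
      exact ⟨by omega, ⟨y, rfl⟩, by omega⟩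
  calc ∑ v : Fin (2 * k + 1), roundShade k v
      = ∑ x ∈ Finset.range (2 * k + 1), if Even x ∧ x < 2 * k then 1 else 0 :=
        Fin.sum_univ_eq_sum_range (fun x => if Even x ∧ x < 2 * k then 1 else 0) _
    _ = k := by
        rw [← Finset.card_filter, hfilter,
          Finset.card_image_of_injective _ (mul_right_injective₀ two_ne_zero), Finset.card_range]

lemma shadeCount_length {k : ℕ} (v : Fin (2 * k + 1)) : shadeCount (2 * k + 1) v = k := by
  have hsmul : ∀ j : Fin (2 * k + 1), j.val • (1 : Fin (2 * k + 1)) = j := by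
    open Fin.CommRing in exact fun j => (nsmul_one j.val).trans (Fin.cast_val_eq_self j)
  calc shadeCount (2 * k + 1) v
      = ∑ j : Fin (2 * k + 1), roundShade k (v - j.val • 1) :=
        (Fin.sum_univ_eq_sum_range (fun j => roundShade k (v - j • 1)) _).symm
    _ = ∑ j, roundShade k (v - j) := by simp only [hsmul]
    _ = ∑ x : Fin (2 * k + 1), roundShade k x := Equiv.sum_comp (Equiv.subLeft v) (roundShade k)
    _ = k := sum_roundShade k

namespace Clearable

lemma cycleGraph_shadeCount {k : ℕ} (hk : 1 ≤ k) (q : ℕ) :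
    Clearable (SimpleGraph.cycleGraph (2 * k + 1)) (fun _ => q) (shadeCount q) := by
  induction q with
  | zero =>
    have hzero : shadeCount (k := k) 0 = 0 := funext fun _ => by simp [shadeCount]
    rw [hzero]
    exact .done _
  | succ q ih =>
    have hcount := fun v => shadeCount_succ (k := k) q v
    have hle := fun v => shadeCount_le (k := k) (q := q) (v - 1)
    have hbound : roundWeight (n := 2 * k + 1) (q + 1) 0 ≤ fun _ => q + 1 := fun v => by
      simp only [roundWeight]
      omega
    refine (round (m := k) (by omega) (by omega) ?_ ?_ (by omega) ?_).mono hbound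
    · grind [roundShade]
    · grind [roundShade]
    · have hweight : roundWeight (n := 2 * k + 1) (q + 1) k = fun _ => q := funext fun v => by
        simp only [roundWeight]
        grind
      have hdemand : roundDemand (shadeCount (k := k) (q + 1)) k = fun v => shadeCount q (v - 1) :=
        funext fun v => by rw [roundDemand, hcount, Nat.add_sub_cancel]
      rw [hweight, hdemand]
      exact of_cycleGraph_rotate (by simpa only [add_sub_cancel_right] using ih)

lemma cycleGraph_odd {k : ℕ} (hk : 1 ≤ k) :
    Clearable (SimpleGraph.cycleGraph (2 * k + 1)) (fun _ => 2 * k + 1) (fun _ => k) := by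
  have hcount : shadeCount (k := k) (2 * k + 1) = fun _ => k := funext shadeCount_length
  exact hcount ▸ cycleGraph_shadeCount hk (2 * k + 1)

end Clearable

/-! ### Bridges and the cycle of a unicyclic graph -/

lemma getVert_adj_getVert_iff {V : Type*} {G : SimpleGraph V} {v : V} {p : G.Walk v v}
    (hp : p.IsCycle) (hchord : p.IsChordless) {i j : ℕ} (hi : i < p.length) (hj : j < p.length) :
    G.Adj (p.getVert i) (p.getVert j) ↔
      i + 1 = j ∨ j + 1 = i ∨ (i = 0 ∧ j + 1 = p.length) ∨ (j = 0 ∧ i + 1 = p.length) := by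
  have hinj : ∀ {a b}, a < p.length → b < p.length → p.getVert a = p.getVert b → a = b :=
    fun ha hb => hp.getVert_injOn' (by grind) (by grind)
  have hclose : p.getVert p.length = p.getVert 0 := p.getVert_length.trans p.getVert_zero.symm
  constructor
  · intro hadj
    obtain ⟨k, hk, hkij⟩ := p.mk_mem_edges_iff_exists.1
      (hchord.mem_edges (p.getVert_mem_support i) (p.getVert_mem_support j) hadj)
    rw [Sym2.eq_iff] at hkij
    rcases Nat.lt_or_ge (k + 1) p.length with hk' | hk'
    · grind
    · obtain rfl : k = p.length - 1 := by omega
      grind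
  · have hsucc := fun k (hk : k < p.length) => p.adj_getVert_succ hk
    rintro (rfl | rfl | ⟨rfl, hj'⟩ | ⟨rfl, hi'⟩)
    · exact hsucc i hi
    · exact (hsucc j hj).symm
    · simpa [hj', hclose] using (hsucc j hj).symm
    · simpa [hi', hclose] using hsucc i hi

lemma exists_cycleGraph_embedding {V : Type*} {G : SimpleGraph V} {v : V} {p : G.Walk v v}
    (hp : p.IsCycle) (hchord : p.IsChordless) :
    ∃ φ : SimpleGraph.cycleGraph p.length ↪g G, Set.range φ = {w | w ∈ p.support} := by
  have hlen := hp.three_le_length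
  have hinj : Function.Injective fun i : Fin p.length => p.getVert i := fun i j hij =>
    Fin.ext (hp.getVert_injOn' (by grind) (by grind) hij)
  refine ⟨⟨⟨_, hinj⟩, fun {i j} => (getVert_adj_getVert_iff hp hchord i.2 j.2).trans
    (cycleGraph_adj_iff_val (by omega)).symm⟩, Set.ext fun w => ⟨?_, fun hw => ?_⟩⟩
  · rintro ⟨i, rfl⟩
    exact p.getVert_mem_support i
  · obtain ⟨i, rfl, hi⟩ := SimpleGraph.Walk.mem_support_iff_exists_getVert.1 hw
    rcases hi.lt_or_eq with hi | rfl
    · exact ⟨⟨i, hi⟩, rfl⟩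
    · exact ⟨⟨0, by omega⟩, p.getVert_zero.trans p.getVert_length.symm⟩

lemma isBridge_of_notMem_edges {V : Type*} {G : SimpleGraph V} {v : V} {p : G.Walk v v}
    (huniq : ∀ ⦃u⦄ (q : G.Walk u u), q.IsCycle → q.edges.toFinset = p.edges.toFinset) {e : Sym2 V}
    (he : e ∈ G.edgeSet) (hep : e ∉ p.edges) : G.IsBridge e :=
  (SimpleGraph.isBridge_iff_forall_cycle_notMem he).2 fun _ q hq heq =>
    hep (by rwa [← List.mem_toFinset, ← huniq q hq, List.mem_toFinset])

lemma isChordless_of_forall_isBridge {V : Type*} {G : SimpleGraph V} {v : V} {p : G.Walk v v}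
    (hbridge : ∀ e ∈ G.edgeSet, e ∉ p.edges → G.IsBridge e) : p.IsChordless := by
  rw [SimpleGraph.Walk.isChordless_iff_forall_mem_edges]
  intro x y hx hy hxy
  by_contra hmem
  have hy' : y ∈ (p.rotate x hx).support := (p.mem_support_rotate_iff x hx).2 hy
  have hpath := SimpleGraph.isBridge_iff_forall_walk_mem_edges.1 (hbridge _ hxy hmem)
    ((p.rotate x hx).takeUntil y hy')
  exact hmem ((p.rotate_edges x hx).mem_iff.1
    ((p.rotate x hx).edges_takeUntil_subset_edges hy' hpath))

lemma eq_of_isBridge_of_adj {V : Type*} {G : SimpleGraph V} {B : Set V} {v x y : V}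
    (hB : (G.induce B).Preconnected) (hv : v ∉ B) (hx : x ∈ B) (hy : y ∈ B)
    (hbridge : G.IsBridge s(v, x)) (hvy : G.Adj v y) : x = y := by
  obtain ⟨q⟩ := hB ⟨y, hy⟩ ⟨x, hx⟩
  let q' : G.Walk y x := q.map (SimpleGraph.Embedding.induce B).toHom
  have hvq : v ∉ q'.support := by
    intro hmem
    obtain ⟨w, -, rfl⟩ := List.mem_map.1 (q.support_map _ ▸ hmem)
    exact hv w.2
  have hmem := SimpleGraph.isBridge_iff_forall_walk_mem_edges.1 hbridge (.cons hvy q')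
  rw [SimpleGraph.Walk.edges_cons, List.mem_cons] at hmem
  rcases hmem with hxy | hmem
  · exact Sym2.congr_right.1 hxy
  · exact absurd (q'.fst_mem_support_of_mem_edges hmem) hvq

theorem pendant_induction {V : Type*} [Finite V] {G : SimpleGraph V} {P : Set V → Prop}
    {A : Set V} (hconn : G.Connected) (hA : (G.induce A).Connected)
    (hbridge : ∀ v ∉ A, ∀ x, G.Adj v x → G.IsBridge s(v, x)) (base : P A)
    (step : ∀ B v, v ∉ B → (∀ x ∈ B, ∀ y ∈ B, G.Adj v x → G.Adj v y → x = y) → P B →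
      P (insert v B)) : P Set.univ := by
  obtain ⟨B, ⟨hAB, hBconn, hPB⟩, hmax⟩ :=
    (Set.toFinite {B | A ⊆ B ∧ (G.induce B).Connected ∧ P B}).exists_maximal
      ⟨A, subset_rfl, hA, base⟩
  suffices B = Set.univ by rwa [← this]
  by_contra hne
  obtain ⟨b, hb⟩ := hBconn.nonempty
  obtain ⟨w, hw⟩ := (Set.ne_univ_iff_exists_notMem B).1 hne
  obtain ⟨q⟩ := hconn b w
  obtain ⟨d, -, hd, hv⟩ := q.exists_boundary_dart B hb hw
  have hinsert : P (insert d.snd B) := step B d.snd hv (fun x hx y hy hvx hvy =>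
    eq_of_isBridge_of_adj hBconn.preconnected hv hx hy (hbridge _ (fun h => hv (hAB h)) x hvx) hvy)
    hPB
  have hinsert_conn : (G.induce (insert d.snd B)).Connected := by
    rw [← Set.union_singleton]
    exact SimpleGraph.connected_induce_union hBconn.preconnected
      SimpleGraph.Preconnected.of_subsingleton hd rfl d.adj
  exact hv (hmax ⟨hAB.trans (Set.subset_insert _ _), hinsert_conn, hinsert⟩
    (Set.subset_insert _ _) (Set.mem_insert _ _))

/-! ### The common value -/

namespace Clearable

lemma exists_cycleGraph {n : ℕ} (hn : 3 ≤ n) {ε : ℝ} (hε : 0 < ε) :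
    ∃ s t : ℕ, 1 ≤ t ∧ t ≤ s ∧ Clearable (SimpleGraph.cycleGraph n) (fun _ => s + t) (fun _ => t) ∧
      ((s : ℝ) + t) / t ≤ n / (n / 2 : ℕ) + ε := by
  rcases n.even_or_odd' with ⟨k, rfl | rfl⟩
  · obtain ⟨t, ht⟩ := exists_nat_one_div_lt hε
    refine ⟨t + 2, t + 1, by omega, by omega, ?_, ?_⟩
    · convert cycleGraph_even (by omega : 2 ≤ k) (t + 1) using 2
      omega
    · rw [Nat.mul_div_cancel_left k two_pos]
      have hk : (k : ℝ) ≠ 0 := Nat.cast_ne_zero.2 (by omega)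
      calc (((t + 2 : ℕ) : ℝ) + (t + 1 : ℕ)) / (t + 1 : ℕ) = 2 + 1 / (t + 1) := by
            push_cast
            field_simp
            ring
        _ ≤ 2 + ε := by gcongr
        _ = (2 * k : ℕ) / k + ε := by
            push_cast
            field_simp
  · have hk : 1 ≤ k := by omega
    refine ⟨k + 1, k, hk, by omega, ?_, ?_⟩
    · convert cycleGraph_odd hk using 2
      omega
    · rw [show (2 * k + 1) / 2 = k by omega, ← Nat.cast_add, show k + 1 + k = 2 * k + 1 by omega]
      exact le_add_of_nonneg_right hε.le

lemma insert_pendant [Finite V] {G : SimpleGraph V} {B : Set V} {v : V} {s t : ℕ} (hts : t ≤ s)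
    (hv : v ∉ B) (hone : ∀ x ∈ B, ∀ y ∈ B, G.Adj v x → G.Adj v y → x = y)
    (h : Clearable G (fun _ => s + t) (B.indicator fun _ => t)) :
    Clearable G (fun _ => s + t) ((insert v B).indicator fun _ => t) := by
  have hupdate := h.update_pendant (v := v) (f := s + t) (t := t) (Set.indicator_of_notMem hv _)
    (by grind [Set.indicator_apply]) (by grind [Set.indicator_apply])
  convert hupdate using 1
  · exact (Function.update_eq_self v _).symm
  · grind [Set.indicator_apply]

theorem of_embedding_of_isBridge {U : Type} [Finite V] {H : SimpleGraph U} {G : SimpleGraph V}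
    (φ : H ↪g G) (hH : H.Connected) (hG : G.Connected)
    (hbridge : ∀ v ∉ Set.range φ, ∀ x, G.Adj v x → G.IsBridge s(v, x)) {s t : ℕ} (hts : t ≤ s)
    (h : Clearable H (fun _ => s + t) (fun _ => t)) :
    Clearable G (fun _ => s + t) (fun _ => t) := by
  have hcomp : (Set.range φ).indicator (fun _ => t) ∘ φ = fun _ => t :=
    funext fun x => Set.indicator_of_mem (Set.mem_range_self x) _
  have hrange : Clearable G (fun _ => s + t) ((Set.range φ).indicator fun _ => t) :=
    of_comp_embedding φ (hcomp.symm ▸ h) fun v hv => Set.indicator_of_notMem hv _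
  have huniv := pendant_induction
    (P := fun B => Clearable G (fun _ => s + t) (B.indicator fun _ => t)) hG
    (φ.isoInduceRange.connected_iff.1 hH) hbridge hrange
    fun B v hv hone => insert_pendant hts hv hone
  rwa [Set.indicator_univ] at huniv

lemma st4Deg [Fintype V] {G : SimpleGraph V} {s t : ℕ} (ht : 1 ≤ t)
    (h : Clearable G (fun _ => s + t) (fun _ => t)) : ST4Deg G (fun _ => s) (fun _ => t) :=
  h.st4DegOn (st := ⟨Finset.univ, fun _ => s, fun _ => t⟩) (fun _ _ => ht)
    (funext fun v => State.demand_of_mem (Finset.mem_univ v)) fun _ _ => le_rfl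

end Clearable

lemma st4Star_eq_fracChrom_of_bounds [Fintype V] {G : SimpleGraph V} {r : ℝ}
    (hlower : ∀ a b : ℕ, 1 ≤ b → ABColorable G a b → r ≤ (a : ℝ) / b)
    (hupper : ∀ ε : ℝ, 0 < ε → ∃ s t : ℕ, 1 ≤ t ∧ ST4Deg G (fun _ => s) (fun _ => t) ∧
      ((s : ℝ) + t) / t ≤ r + ε) : ST4Star G = FracChrom G := by
  have hbdd : BddBelow {x : ℝ | ∃ s t : ℕ, 1 ≤ t ∧ ST4Deg G (fun _ => s) (fun _ => t) ∧
      x = ((s : ℝ) + t) / t} := ⟨0, by rintro x ⟨s, t, _, _, rfl⟩; positivity⟩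
  have hbdd' : BddBelow {x : ℝ | ∃ a b : ℕ, 1 ≤ b ∧ b ≤ a ∧ ABColorable G a b ∧
      x = (a : ℝ) / b} := ⟨0, by rintro x ⟨a, b, _, _, _, rfl⟩; positivity⟩
  obtain ⟨s₀, t₀, ht₀, hdeg₀, -⟩ := hupper 1 one_pos
  apply le_antisymm
  · calc ST4Star G ≤ r := le_of_forall_pos_le_add fun ε hε => by
          obtain ⟨s, t, ht, hdeg, hle⟩ := hupper ε hε
          exact (csInf_le hbdd ⟨s, t, ht, hdeg, rfl⟩).trans hle
      _ ≤ FracChrom G := by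
          refine le_csInf ⟨_, s₀ + t₀, t₀, ht₀, by omega, hdeg₀.abColorable ht₀, rfl⟩ ?_
          rintro x ⟨a, b, hb, -, hab, rfl⟩
          exact hlower a b hb hab
  · refine le_csInf ⟨_, s₀, t₀, ht₀, hdeg₀, rfl⟩ ?_
    rintro x ⟨s, t, ht, hdeg, rfl⟩
    exact csInf_le hbdd' ⟨s + t, t, ht, by omega, hdeg.abColorable ht, by push_cast; rfl⟩

/-- For any unicyclic graph `G` (a connected graph containing exactly one
cycle, i.e. exactly one edge set of a cycle), `ST⁽⁴⁾*(G) = χ*(G)`. -/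
theorem st4Star_unicyclic {V : Type} [Fintype V] (G : SimpleGraph V)
    (hconn : G.Connected)
    (hcyc : ∃! C : Finset (Sym2 V), ∃ (v : V) (p : G.Walk v v),
        p.IsCycle ∧ p.edges.toFinset = C) :
    ST4Star G = FracChrom G := by
  obtain ⟨_, ⟨v, p, hp, rfl⟩, huniq⟩ := hcyc
  have hbridge : ∀ e ∈ G.edgeSet, e ∉ p.edges → G.IsBridge e := fun e =>
    isBridge_of_notMem_edges fun u q hq => huniq _ ⟨u, q, hq, rfl⟩
  have hlen := hp.three_le_length
  have : NeZero p.length := ⟨by omega⟩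
  obtain ⟨φ, hφ⟩ := exists_cycleGraph_embedding hp (isChordless_of_forall_isBridge hbridge)
  have hpendant : ∀ x ∉ Set.range φ, ∀ y, G.Adj x y → G.IsBridge s(x, y) := fun x hx y hxy =>
    hbridge _ hxy fun hmem => hx (hφ ▸ p.fst_mem_support_of_mem_edges hmem)
  refine st4Star_eq_fracChrom_of_bounds (r := p.length / (p.length / 2 : ℕ)) ?_ ?_
  · intro a b hb hab
    rw [div_le_div_iff₀ (by norm_cast; omega) (by exact_mod_cast hb)]
    exact_mod_cast (hab.comap φ.toHom).cycleGraph_mul_le (by omega)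
  · intro ε hε
    obtain ⟨s, t, ht, hts, hclear, hle⟩ := Clearable.exists_cycleGraph hlen hε
    have hG := hclear.of_embedding_of_isBridge φ ⟨SimpleGraph.cycleGraph_preconnected⟩ hconn
      hpendant hts
    exact ⟨s, t, ht, hG.st4Deg ht, hle⟩

end StrictDeg
end
end

section
/- Suppose v_1,…,v_n is an arbitrary ordering of the vertices of a graph G, and for each i let N_i^- = {v_j ∈ N_G(v_i) : j < i}. If S is a shield and T is a target of G satisfying S(v_i) ≥ Σ_{v_j ∈ N_i^-} T(v_j) for each i ∈ {1,…,n}, then G is ST^(4)-(S,T)-degenerate. Consequently, G is ST^(4)-(col(G)−1, 1)-degenerate and ST^(4)*(G) ≤ col(G), where col(G), the coloring number of G, is one plus the least d such that some ordering of V(G) has every vertex with at most d neighbors among the preceding vertices. -/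
/-!
Process the vertices in the given order, saving nobody and repeating the operation at each vertex
until its target is used up. Exhausting the first remaining vertex `u` costs each later neighbor of
`u` exactly `T u` of its shield. The neighbor has that much to spend, and what it has left still
covers the targets of its other earlier neighbors.
-/

open scoped Classical

noncomputable section

namespace StrictDeg

variable {V : Type}

/-- The coloring number of `G`: one plus the least `d` such that some ordering of the
vertices of `G` has every vertex with at most `d` neighbors among the preceding vertices. -/
def colNum {V : Type} [Fintype V] (G : SimpleGraph V) : ℕ :=
  1 + sInf { d : ℕ | ∃ e : Fin (Fintype.card V) ≃ V, ∀ i : Fin (Fintype.card V),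
      (Finset.univ.filter (fun j => j < i ∧ G.Adj (e i) (e j))).card ≤ d }

section ShadeSave

variable {G : SimpleGraph V} {A : Finset V} {S T : V → ℕ} {u v : V}

theorem ST4DegOn.of_applyStep_eq {W A' : Finset V} {S' T' : V → ℕ}
    (happly : applyStep G ⟨A, S, T⟩ u W = ⟨A', S', T'⟩) (hlegal : LegalStep G ⟨A, S, T⟩ u W)
    (hW : W.card ≤ 1) (h : ST4DegOn G A' S' T') : ST4DegOn G A S T := by
  obtain ⟨l, hl, hcard, hfinal⟩ := h
  rw [← happly] at hl hfinal
  exact ⟨(u, W) :: l, ⟨hlegal, hl⟩, List.forall_mem_cons.mpr ⟨hW, hcard⟩, hfinal⟩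

/-- The shield left over from `S` after `k` operations at `u` that save no vertex, all on the same
induced subgraph `G[A]`; the subtraction truncates when the shield of a neighbor is below `k`. -/
def shade (G : SimpleGraph V) (A : Finset V) (u : V) (k : ℕ) (S : V → ℕ) : V → ℕ :=
  fun v => if G.Adj u v ∧ v ∈ A then S v - k else S v

theorem shade_of_adj (huv : G.Adj u v) (hv : v ∈ A) (k : ℕ) (S : V → ℕ) :
    shade G A u k S v = S v - k :=
  if_pos ⟨huv, hv⟩

theorem shade_of_not_adj (huv : ¬G.Adj u v) (k : ℕ) (S : V → ℕ) : shade G A u k S v = S v :=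
  if_neg fun h => huv h.1

theorem shade_shade (G : SimpleGraph V) (A : Finset V) (u : V) (k m : ℕ) (S : V → ℕ) :
    shade G A u m (shade G A u k S) = shade G A u (k + m) S := by
  funext v
  simp only [shade]
  split_ifs <;> omega

theorem applyStep_empty_of_target_eq_one (hTu : T u = 1) :
    applyStep G ⟨A, S, T⟩ u ∅ = ⟨A.erase u, shade G A u 1 S, T⟩ := by
  simp [applyStep, shade, hTu, funext_iff]

theorem applyStep_empty_of_one_lt_target (hTu : 1 < T u) :
    applyStep G ⟨A, S, T⟩ u ∅ = ⟨A, shade G A u 1 S, Function.update T u (T u - 1)⟩ := by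
  simp [applyStep, shade, hTu, hTu.ne', funext_iff, Function.update_apply]

theorem legalStep_empty_iff :
    LegalStep G ⟨A, S, T⟩ u ∅ ↔
      u ∈ A ∧ 0 < S u + T u ∧ ∀ v ∈ A, G.Adj u v → 1 ≤ S v := by
  simp [LegalStep]

/-- The operation that deletes `u` does not lower its target, hence the value `1` left at `u`. -/
theorem ST4DegOn.of_erase (hu : u ∈ A) (hTu : 1 ≤ T u) (hS : ∀ v ∈ A, G.Adj u v → T u ≤ S v)
    (h : ST4DegOn G (A.erase u) (shade G A u (T u) S) (Function.update T u 1)) :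
    ST4DegOn G A S T := by
  have hlegal {S T : V → ℕ} (hTu : 1 ≤ T u) (hS : ∀ v ∈ A, G.Adj u v → T u ≤ S v) :
      LegalStep G ⟨A, S, T⟩ u ∅ :=
    legalStep_empty_iff.mpr
      ⟨hu, Nat.add_pos_right _ hTu, fun v hv huv => hTu.trans (hS v hv huv)⟩
  obtain ⟨k, hk⟩ := Nat.exists_eq_add_of_le' hTu
  induction k generalizing S T with
  | zero =>
    rw [zero_add] at hk
    rw [hk, Function.update_eq_self_iff.mpr hk.symm] at h
    exact .of_applyStep_eq (applyStep_empty_of_target_eq_one hk) (hlegal hTu hS) (by simp) h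
  | succ k ih =>
    have hT' : Function.update T u (T u - 1) u = k + 1 := by
      rw [Function.update_self, hk, Nat.add_sub_cancel]
    refine .of_applyStep_eq (applyStep_empty_of_one_lt_target (by omega)) (hlegal hTu hS) (by simp)
      (ih (by omega) (fun v hv huv => ?_) ?_ hT')
    · rw [hT', shade_of_adj huv hv]
      exact Nat.le_sub_of_add_le (hk ▸ hS v hv huv)
    · rwa [hT', shade_shade, Function.update_idem, add_comm 1, ← hk]

end ShadeSave

section Ordering

variable {ι : Type*} [LinearOrder ι]

/-- The neighbors of `v` in `A` that precede `v` when the vertices are ranked by `r`; this is `N_i⁻`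
for `v = v_i` when `A` is the whole vertex set and `r` sends each vertex to its index. -/
def backNeighbors (G : SimpleGraph V) (r : V → ι) (A : Finset V) (v : V) : Finset V :=
  A.filter fun w => r w < r v ∧ G.Adj v w

variable {G : SimpleGraph V} {r : V → ι} {A : Finset V} {S T : V → ℕ} {u v : V}

theorem backNeighbors_subset (G : SimpleGraph V) (r : V → ι) (A : Finset V) (v : V) :
    backNeighbors G r A v ⊆ A :=
  Finset.filter_subset _ _

theorem backNeighbors_insert_of_not_adj (huv : ¬G.Adj u v) :
    backNeighbors G r (insert u A) v = backNeighbors G r A v :=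
  (Finset.filter_insert _ _ _).trans (if_neg fun h => huv h.2.symm)

theorem sum_backNeighbors_insert_of_adj (hu : u ∉ A) (huv : G.Adj u v) (hr : r u < r v) :
    ∑ w ∈ backNeighbors G r (insert u A) v, T w = T u + ∑ w ∈ backNeighbors G r A v, T w := by
  have hins : backNeighbors G r (insert u A) v = insert u (backNeighbors G r A v) :=
    (Finset.filter_insert _ _ _).trans (if_pos ⟨hr, huv.symm⟩)
  rw [hins, Finset.sum_insert (Finset.notMem_mono (backNeighbors_subset G r A v) hu)]

theorem sum_backNeighbors_le_shade (hu : u ∉ A) (hv : v ∈ A) (hr : G.Adj u v → r u < r v)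
    (hS : ∑ w ∈ backNeighbors G r (insert u A) v, T w ≤ S v) :
    ∑ w ∈ backNeighbors G r A v, T w ≤ shade G (insert u A) u (T u) S v := by
  by_cases huv : G.Adj u v
  · rw [sum_backNeighbors_insert_of_adj hu huv (hr huv)] at hS
    rw [shade_of_adj huv (Finset.mem_insert_of_mem hv)]
    exact Nat.le_sub_of_add_le' hS
  · rwa [shade_of_not_adj huv, ← backNeighbors_insert_of_not_adj huv]

theorem ST4DegOn.of_sum_backNeighbors_le (hr : ∀ ⦃v w⦄, G.Adj v w → r v ≠ r w)
    (hT : ∀ v ∈ A, 1 ≤ T v) (hS : ∀ v ∈ A, ∑ w ∈ backNeighbors G r A v, T w ≤ S v) :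
    ST4DegOn G A S T := by
  induction A using Finset.induction_on_min_value r generalizing S T with
  | empty => exact ⟨[], trivial, by simp, rfl⟩
  | insert u A hu hmin ih =>
    have hlt : ∀ v ∈ A, G.Adj u v → r u < r v := fun v hv huv => (hmin v hv).lt_of_ne (hr huv)
    have hupdate : ∀ v ∈ A, Function.update T u 1 v = T v := fun v hv =>
      Function.update_of_ne (ne_of_mem_of_not_mem hv hu) _ _
    refine .of_erase (Finset.mem_insert_self u A) (hT u (Finset.mem_insert_self u A)) ?_ ?_
    · intro v hv huv
      have hvA : v ∈ A := Finset.mem_of_mem_insert_of_ne hv huv.ne'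
      refine le_trans ?_ (hS v hv)
      rw [sum_backNeighbors_insert_of_adj hu huv (hlt v hvA huv)]
      exact Nat.le_add_right _ _
    · rw [Finset.erase_insert hu]
      refine ih (fun v hv => ?_) fun v hv => ?_
      · rw [hupdate v hv]
        exact hT v (Finset.mem_insert_of_mem hv)
      · rw [Finset.sum_congr rfl fun w hw => hupdate w (backNeighbors_subset G r A v hw)]
        exact sum_backNeighbors_le_shade hu hv (hlt v hv) (hS v (Finset.mem_insert_of_mem hv))

theorem sum_backNeighbors_equiv_symm [Fintype V] [Fintype ι] (G : SimpleGraph V) (e : ι ≃ V)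
    (T : V → ℕ) (i : ι) :
    ∑ w ∈ backNeighbors G e.symm Finset.univ (e i), T w =
      ∑ j ∈ Finset.univ.filter (fun j => j < i ∧ G.Adj (e i) (e j)), T (e j) := by
  simp only [backNeighbors, Finset.sum_filter, ← Equiv.sum_comp e, Equiv.symm_apply_apply]

theorem ST4Deg.of_sum_filter_lt_le [Fintype V] [Fintype ι] (e : ι ≃ V) (hT : ∀ v, 1 ≤ T v)
    (hS : ∀ i, ∑ j ∈ Finset.univ.filter (fun j => j < i ∧ G.Adj (e i) (e j)), T (e j) ≤ S (e i)) :
    ST4Deg G S T := by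
  refine ST4DegOn.of_sum_backNeighbors_le (r := e.symm) (fun _ _ h => e.symm.injective.ne h.ne)
    (fun v _ => hT v) fun v _ => ?_
  obtain ⟨i, rfl⟩ := e.surjective v
  exact (sum_backNeighbors_equiv_symm G e T i).trans_le (hS i)

end Ordering

section ColoringNumber

variable [Fintype V] {G : SimpleGraph V}

theorem exists_equiv_card_filter_lt_le_colNum_sub_one (G : SimpleGraph V) :
    ∃ e : Fin (Fintype.card V) ≃ V, ∀ i,
      (Finset.univ.filter fun j => j < i ∧ G.Adj (e i) (e j)).card ≤ colNum G - 1 := by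
  have hne : { d : ℕ | ∃ e : Fin (Fintype.card V) ≃ V, ∀ i : Fin (Fintype.card V),
      (Finset.univ.filter (fun j => j < i ∧ G.Adj (e i) (e j))).card ≤ d }.Nonempty :=
    ⟨Fintype.card (Fin (Fintype.card V)), (Fintype.equivFin V).symm, fun _ => Finset.card_le_univ _⟩
  rw [colNum, Nat.add_sub_cancel_left]
  exact Nat.sInf_mem hne

theorem st4Deg_colNum_sub_one (G : SimpleGraph V) :
    ST4Deg G (fun _ => colNum G - 1) (fun _ => 1) := by
  obtain ⟨e, he⟩ := exists_equiv_card_filter_lt_le_colNum_sub_one G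
  exact ST4Deg.of_sum_filter_lt_le e (fun _ => le_rfl) fun i =>
    (Finset.card_eq_sum_ones _).symm.trans_le (he i)

theorem ST4Deg.st4Star_le {s t : ℕ} (ht : 1 ≤ t) (h : ST4Deg G (fun _ => s) (fun _ => t)) :
    ST4Star G ≤ ((s : ℝ) + t) / t := by
  refine csInf_le ⟨0, ?_⟩ ⟨s, t, ht, h, rfl⟩
  rintro x ⟨s', t', -, -, rfl⟩
  positivity

theorem st4Star_le_colNum (G : SimpleGraph V) : ST4Star G ≤ colNum G := by
  have hcol : 1 ≤ colNum G := Nat.le_add_right 1 _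
  simpa [Nat.cast_sub hcol] using (st4Deg_colNum_sub_one G).st4Star_le le_rfl

end ColoringNumber

/-- Suppose `v_1, …, v_n` is an arbitrary ordering of the vertices of a
graph `G` (given by an equivalence `e`), and for each `i` let
`N_i⁻ = {v_j ∈ N_G(v_i) : j < i}`.  If `S` is a shield and `T` is a target of `G` satisfying
`S(v_i) ≥ Σ_{v_j ∈ N_i⁻} T(v_j)` for each `i`, then `G` is `ST⁽⁴⁾`-`(S,T)`-degenerate.
Consequently, `G` is `ST⁽⁴⁾`-`(col(G)−1, 1)`-degenerate and `ST⁽⁴⁾*(G) ≤ col(G)`. -/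
theorem st4Deg_of_back_degree {V : Type} [Fintype V] (G : SimpleGraph V)
    (e : Fin (Fintype.card V) ≃ V) (S T : V → ℕ) (hT : ∀ v, 1 ≤ T v)
    (hS : ∀ i : Fin (Fintype.card V),
      (∑ j ∈ Finset.univ.filter (fun j => j < i ∧ G.Adj (e i) (e j)), T (e j)) ≤ S (e i)) :
    ST4Deg G S T ∧
    ST4Deg G (fun _ => colNum G - 1) (fun _ => 1) ∧
    ST4Star G ≤ (colNum G : ℝ) :=
  ⟨ST4Deg.of_sum_filter_lt_le e hT hS, st4Deg_colNum_sub_one G, st4Star_le_colNum G⟩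

end StrictDeg
end
end
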